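/- Let m ≥ 3 be an integer that has an odd factor (i.e. m is not a power of 2). Then inf{β_A : A ∈ ℝ^{m×2}} = (1 − 1/(m·sin(π/(2m))))^{−1/2}, and this infimum is attained by some A ∈ ℝ^{m×2}. -/

import Mathlib

noncomputable section

open Real
open scoped RealInnerProductSpace ENNReal

/-- ℝ² as a Euclidean space. -/
abbrev E2 : Type := EuclideanSpace ℝ (Fin 2)

/-- The vector `(x, y)` in ℝ². -/
def vec2 (x y : ℝ) : E2 := (WithLp.equiv 2 (Fin 2 → ℝ)).symm ![x, y]

/-- The coordinates of a vector in ℝ². -/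
def toFun2 (v : E2) : Fin 2 → ℝ := WithLp.equiv 2 (Fin 2 → ℝ) v

/-- The phaseless measurement map `Φ_A(x) = (|⟨a_j, x⟩|)_j`. -/
def PhiMap {m : ℕ} (a : Fin m → E2) (x : E2) : EuclideanSpace ℝ (Fin m) :=
  (WithLp.equiv 2 (Fin m → ℝ)).symm fun j => |⟪a j, x⟫|

/-- The distance `dist(x,y) = min ‖x − y‖ ‖x + y‖` (real phase retrieval distance). -/
def pdist (x y : E2) : ℝ := min ‖x - y‖ ‖x + y‖

/-- The set of Lipschitz ratios of the phaseless measurement map. -/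
def ratioSet {m : ℕ} (a : Fin m → E2) : Set ℝ :=
  {r | ∃ x y : E2, pdist x y ≠ 0 ∧ r = ‖PhiMap a x - PhiMap a y‖ / pdist x y}

/-- The optimal lower Lipschitz constant `L_A`. -/
def lipL {m : ℕ} (a : Fin m → E2) : ℝ := sInf (ratioSet a)

/-- The optimal upper Lipschitz constant `U_A`. -/
def lipU {m : ℕ} (a : Fin m → E2) : ℝ := sSup (ratioSet a)

/-- The condition number `β_A = U_A / L_A`, with `β_A = +∞` when `L_A = 0`. -/
def condNum {m : ℕ} (a : Fin m → E2) : ℝ≥0∞ :=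
  if lipL a = 0 then ⊤ else ENNReal.ofReal (lipU a / lipL a)

/-- An edge family: nonzero vectors with pairwise distinct directions summing to zero
(the edge vectors of a strictly convex polygon). -/
def IsEdgeFamily {m : ℕ} (e : Fin m → E2) : Prop :=
  (∀ j, e j ≠ 0) ∧
  (∀ i j : Fin m, i ≠ j → ‖e i‖⁻¹ • e i ≠ ‖e j‖⁻¹ • e j) ∧
  ∑ j, e j = 0

/-- The diameter-to-perimeter ratio of the polygon with edge vectors `e`. -/
def rRatio {m : ℕ} (e : Fin m → E2) : ℝ :=
  sSup {s | ∃ u : E2, ‖u‖ = 1 ∧ s = ∑ j, |⟪e j, u⟫|} / (2 * ∑ j, ‖e j‖)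

/-- An optimal edge family: minimizes `rRatio` among all edge families of size `m`. -/
def IsOptimalEdgeFamily {m : ℕ} (e : Fin m → E2) : Prop :=
  IsEdgeFamily e ∧ ∀ e' : Fin m → E2, IsEdgeFamily e' → rRatio e ≤ rRatio e'

/-- The complex square map on ℝ² ≅ ℂ: `f(t·(cos φ, sin φ)) = t²·(cos 2φ, sin 2φ)`. -/
def csq (v : E2) : E2 :=
  vec2 (toFun2 v 0 ^ 2 - toFun2 v 1 ^ 2) (2 * toFun2 v 0 * toFun2 v 1)

/-- The harmonic frame `E_m`: the `j`-th row is `(cos((j−1)π/m), sin((j−1)π/m))`, `j = 1,…,m`. -/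
def harmonicFrame (m : ℕ) : Fin m → E2 :=
  fun j => vec2 (Real.cos ((j : ℕ) * π / m)) (Real.sin ((j : ℕ) * π / m))

/-! Write `v j = csq (a j)`, so that `⟪a j, x⟫ ^ 2 = (‖v j‖ ‖x‖ ^ 2 + ⟪v j, csq x⟫) / 2`. Since
`(|X| - |Y|) ^ 2 = min ((X + Y) ^ 2) ((X - Y) ^ 2)`, both Lipschitz constants are governed by the
`v j`: with `P = ∑ ‖v j‖`, one finds `U ^ 2 = (P + ‖∑ v j‖) / 2`, and
`L ^ 2 ≤ (P - max_u ∑ |⟪v j, u⟫|) / 2`, where `u` runs over the unit vectors, with equality if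
`∑ v j = 0`. In the latter case the `v j` are the edges of a convex polygon of perimeter `P` and the
maximum is twice its diameter, so the theorem becomes Reinhardt's isodiametric problem: minimise
the diameter of an `m`-gon of given perimeter.

For the inequality, sort the directions of the `v j` modulo `π` and add up `|⟪v j, u⟫|` over the
normals `u` to the bisectors of consecutive directions, weighted by the sine of half the gap. For a
unit vector the weighted sum is half the variation of a cosine sampled over a half-period; it is `1`
when the maximum of the cosine is sampled and at most `1` always. Concavity of the sine bounds the
total weight by `m sin (π / 2m)`. Equality requires equally spaced directions modulo `π`, and an odd
factor of `m` allows the signs of the vectors to be chosen so that they sum to zero. -/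

lemma inner_vec2 (a b c d : ℝ) : ⟪vec2 a b, vec2 c d⟫ = a * c + b * d := by
  simp [vec2, PiLp.inner_apply, Fin.sum_univ_two, mul_comm]

/-- The unit vector of ℝ² with polar angle `t`, the image of `exp (t * I)` under `ℂ ≅ ℝ²`. -/
def unitVec (t : ℝ) : E2 := vec2 (cos t) (sin t)

lemma unitVec_eq_repr_exp (t : ℝ) :
    unitVec t = Complex.orthonormalBasisOneI.repr (Complex.exp (t * Complex.I)) := by
  ext i
  fin_cases i
  · simp [unitVec, vec2, Complex.exp_ofReal_mul_I_re]
  · simp [unitVec, vec2, Complex.exp_ofReal_mul_I_im]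

lemma inner_unitVec (s t : ℝ) : ⟪unitVec s, unitVec t⟫ = cos (s - t) := by
  rw [unitVec, unitVec, inner_vec2, cos_sub]

lemma norm_unitVec (t : ℝ) : ‖unitVec t‖ = 1 := by
  rw [unitVec_eq_repr_exp, LinearIsometryEquiv.norm_map, Complex.norm_exp_ofReal_mul_I]

lemma unitVec_add_pi (t : ℝ) : unitVec (t + π) = -unitVec t := by
  ext i
  fin_cases i <;> simp [unitVec, vec2]

lemma exists_norm_smul_unitVec (v : E2) : ∃ t, ‖v‖ • unitVec t = v := by
  obtain ⟨z, rfl⟩ := Complex.orthonormalBasisOneI.repr.surjective v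
  refine ⟨z.arg, ?_⟩
  rw [unitVec_eq_repr_exp, LinearIsometryEquiv.norm_map, ← map_smul, Complex.real_smul,
    Complex.norm_mul_exp_arg_mul_I]

lemma csq_unitVec (t : ℝ) : csq (unitVec t) = unitVec (2 * t) := by
  rw [unitVec, unitVec, cos_two_mul', sin_two_mul, mul_right_comm]
  ext i
  fin_cases i <;> simp [csq, toFun2, vec2]

lemma csq_smul (r : ℝ) (v : E2) : csq (r • v) = r ^ 2 • csq v := by
  ext i
  fin_cases i <;> simp [csq, toFun2, vec2] <;> ring

lemma norm_csq (v : E2) : ‖csq v‖ = ‖v‖ ^ 2 := by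
  obtain ⟨t, ht⟩ := exists_norm_smul_unitVec v
  rw [← ht, csq_smul, csq_unitVec]
  simp [norm_smul, norm_unitVec]

lemma inner_sq_eq (a x : E2) :
    ⟪a, x⟫ ^ 2 = (‖csq a‖ * ‖x‖ ^ 2 + ⟪csq a, csq x⟫) / 2 := by
  obtain ⟨s, hs⟩ := exists_norm_smul_unitVec a
  obtain ⟨t, ht⟩ := exists_norm_smul_unitVec x
  rw [norm_csq]
  nth_rw 1 3 [← hs]
  nth_rw 1 3 [← ht]
  simp only [csq_smul, csq_unitVec, real_inner_smul_left, real_inner_smul_right, inner_unitVec,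
    ← mul_sub, cos_two_mul]
  ring

lemma sq_abs_sub_abs (X Y : ℝ) : (|X| - |Y|) ^ 2 = min ((X + Y) ^ 2) ((X - Y) ^ 2) := by
  have expand : (|X| - |Y|) ^ 2 = X ^ 2 + Y ^ 2 - 2 * |X * Y| := by
    rw [abs_mul, ← sq_abs X, ← sq_abs Y]
    ring
  rcases le_total 0 (X * Y) with h | h
  · rw [expand, abs_of_nonneg h, min_eq_right (by linarith)]
    ring
  · rw [expand, abs_of_nonpos h, min_eq_left (by linarith)]
    ring

lemma pdist_zero_right (x : E2) : pdist x 0 = ‖x‖ := by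
  simp [pdist]

lemma pdist_nonneg (x y : E2) : 0 ≤ pdist x y :=
  le_min (norm_nonneg _) (norm_nonneg _)

section LipschitzConstants

variable {m : ℕ} (a : Fin m → E2)

lemma norm_PhiMap_sub_sq (x y : E2) :
    ‖PhiMap a x - PhiMap a y‖ ^ 2 = ∑ j, min (⟪a j, x + y⟫ ^ 2) (⟪a j, x - y⟫ ^ 2) := by
  rw [EuclideanSpace.norm_sq_eq]
  refine Finset.sum_congr rfl fun j _ => ?_
  simp [PhiMap, sq_abs_sub_abs, inner_add_right, inner_sub_right]

lemma sum_inner_sq (z : E2) :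
    ∑ j, ⟪a j, z⟫ ^ 2 = ((∑ j, ‖csq (a j)‖) * ‖z‖ ^ 2 + ⟪∑ j, csq (a j), csq z⟫) / 2 := by
  simp only [inner_sq_eq (a _) z, ← Finset.sum_div, Finset.sum_add_distrib, ← Finset.sum_mul,
    sum_inner]

lemma norm_PhiMap_sub_sq_le (x y : E2) :
    ‖PhiMap a x - PhiMap a y‖ ^ 2 ≤
      (∑ j, ‖csq (a j)‖ + ‖∑ j, csq (a j)‖) / 2 * pdist x y ^ 2 := by
  have le_norm_sq (z : E2) :
      ∑ j, ⟪a j, z⟫ ^ 2 ≤ (∑ j, ‖csq (a j)‖ + ‖∑ j, csq (a j)‖) / 2 * ‖z‖ ^ 2 := by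
    have := real_inner_le_norm (∑ j, csq (a j)) (csq z)
    rw [norm_csq] at this
    rw [sum_inner_sq]
    linarith
  rw [norm_PhiMap_sub_sq, pdist]
  rcases min_choice ‖x - y‖ ‖x + y‖ with h | h <;> rw [h]
  · exact (Finset.sum_le_sum fun j _ => min_le_right _ _).trans (le_norm_sq (x - y))
  · exact (Finset.sum_le_sum fun j _ => min_le_left _ _).trans (le_norm_sq (x + y))

lemma nonneg_of_mem_ratioSet {r : ℝ} (hr : r ∈ ratioSet a) : 0 ≤ r := by
  obtain ⟨x, y, -, rfl⟩ := hr
  exact div_nonneg (norm_nonneg _) (pdist_nonneg x y)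

lemma le_sqrt_of_mem_ratioSet {r : ℝ} (hr : r ∈ ratioSet a) :
    r ≤ √((∑ j, ‖csq (a j)‖ + ‖∑ j, csq (a j)‖) / 2) := by
  obtain ⟨x, y, hxy, rfl⟩ := hr
  refine le_sqrt_of_sq_le ?_
  rw [div_pow, div_le_iff₀ (by positivity)]
  exact norm_PhiMap_sub_sq_le a x y

lemma sqrt_sum_inner_sq_mem_ratioSet {x : E2} (hx : ‖x‖ = 1) :
    √(∑ j, ⟪a j, x⟫ ^ 2) ∈ ratioSet a := by
  refine ⟨x, 0, by simp [pdist_zero_right, hx], ?_⟩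
  rw [pdist_zero_right, hx, div_one, ← sqrt_sq (norm_nonneg (_ - _)), norm_PhiMap_sub_sq]
  simp

lemma ratioSet_nonempty : (ratioSet a).Nonempty :=
  ⟨_, sqrt_sum_inner_sq_mem_ratioSet a (norm_unitVec 0)⟩

lemma bddBelow_ratioSet : BddBelow (ratioSet a) :=
  ⟨0, fun _ => nonneg_of_mem_ratioSet a⟩

lemma bddAbove_ratioSet : BddAbove (ratioSet a) :=
  ⟨_, fun _ => le_sqrt_of_mem_ratioSet a⟩

lemma lipL_nonneg : 0 ≤ lipL a :=
  sInf_nonneg fun _ => nonneg_of_mem_ratioSet a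

lemma lipU_nonneg : 0 ≤ lipU a :=
  sSup_nonneg fun _ => nonneg_of_mem_ratioSet a

theorem lipU_sq : lipU a ^ 2 = (∑ j, ‖csq (a j)‖ + ‖∑ j, csq (a j)‖) / 2 := by
  refine le_antisymm ?_ ?_
  · have h : lipU a ≤ _ := csSup_le (ratioSet_nonempty a) fun _ => le_sqrt_of_mem_ratioSet a
    exact (pow_le_pow_left₀ (lipU_nonneg a) h 2).trans_eq (sq_sqrt (by positivity))
  · obtain ⟨t, ht⟩ := exists_norm_smul_unitVec (∑ j, csq (a j))
    have hx := norm_unitVec (t / 2)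
    have h : _ ≤ lipU a := le_csSup (bddAbove_ratioSet a)
      (sqrt_sum_inner_sq_mem_ratioSet a hx)
    have hinner : ⟪∑ j, csq (a j), csq (unitVec (t / 2))⟫ = ‖∑ j, csq (a j)‖ := by
      rw [csq_unitVec, mul_div_cancel₀ t two_ne_zero]
      nth_rw 1 [← ht]
      rw [real_inner_smul_left, real_inner_self_eq_norm_sq, norm_unitVec, one_pow, mul_one]
    rw [sqrt_le_left (lipU_nonneg a), sum_inner_sq, hx, hinner] at h
    simpa using h

lemma lipL_mul_pdist_le (x y : E2) : lipL a * pdist x y ≤ ‖PhiMap a x - PhiMap a y‖ := by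
  by_cases hxy : pdist x y = 0
  · simp [hxy]
  · rw [← le_div_iff₀ ((pdist_nonneg x y).lt_of_ne' hxy)]
    exact csInf_le (bddBelow_ratioSet a) ⟨x, y, hxy, rfl⟩

lemma le_lipL_sq {K : ℝ}
    (h : ∀ x y, K * pdist x y ^ 2 ≤ ‖PhiMap a x - PhiMap a y‖ ^ 2) : K ≤ lipL a ^ 2 := by
  suffices √K ≤ lipL a from (sqrt_le_left (lipL_nonneg a)).1 this
  refine le_csInf (ratioSet_nonempty a) ?_
  rintro _ ⟨x, y, hxy, rfl⟩
  have hpos : 0 < pdist x y := (pdist_nonneg x y).lt_of_ne' hxy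
  refine sqrt_le_iff.2 ⟨by positivity, ?_⟩
  rw [div_pow, le_div_iff₀ (by positivity)]
  exact h x y

lemma lipL_le_lipU : lipL a ≤ lipU a :=
  csInf_le_csSup (ratioSet_nonempty a) (bddBelow_ratioSet a) (bddAbove_ratioSet a)

lemma min_inner_sq_of_norm_eq_one (b : E2) {s d : E2} (hs : ‖s‖ = 1) (hd : ‖d‖ = 1) :
    min (⟪b, s⟫ ^ 2) (⟪b, d⟫ ^ 2) =
      (‖csq b‖ + (⟪csq b, csq s + csq d⟫ - |⟪csq b, csq s - csq d⟫|) / 2) / 2 := by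
  rw [inner_sq_eq, inner_sq_eq, hs, hd, inf_eq_half_smul_add_sub_abs_sub' ℝ, smul_eq_mul,
    abs_sub_comm, ← sub_div, add_sub_add_left_eq_sub, abs_div, ← inner_sub_right, inner_add_right,
    abs_two]
  ring

theorem lipL_sq_le {u : E2} (hu : ‖u‖ = 1) :
    lipL a ^ 2 ≤ (∑ j, ‖csq (a j)‖ - ∑ j, |⟪csq (a j), u⟫|) / 2 := by
  obtain ⟨t, rfl⟩ : ∃ t, unitVec t = u := by
    simpa [hu] using exists_norm_smul_unitVec u
  set s := unitVec (t / 2)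
  set d := unitVec (t / 2 + π / 2)
  have hs : ‖s‖ = 1 := norm_unitVec _
  have hd : ‖d‖ = 1 := norm_unitVec _
  have hcs : csq s = unitVec t := by rw [csq_unitVec, mul_div_cancel₀ t two_ne_zero]
  have hcd : csq d = -unitVec t := by rw [csq_unitVec, ← unitVec_add_pi]; ring_nf
  set x : E2 := (2⁻¹ : ℝ) • (s + d)
  set y : E2 := (2⁻¹ : ℝ) • (s - d)
  have hadd : x + y = s := by module
  have hsub : x - y = d := by module
  have h := pow_le_pow_left₀ (mul_nonneg (lipL_nonneg a) (pdist_nonneg x y))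
    (lipL_mul_pdist_le a x y) 2
  rw [norm_PhiMap_sub_sq, pdist, hadd, hsub, hs, hd, min_self, mul_one] at h
  refine h.trans_eq ?_
  rw [← Finset.sum_sub_distrib, Finset.sum_div]
  refine Finset.sum_congr rfl fun j _ => ?_
  rw [min_inner_sq_of_norm_eq_one _ hs hd, hcs, hcd, add_neg_cancel, inner_zero_right,
    sub_neg_eq_add, ← two_smul ℝ (unitVec t), real_inner_smul_right, abs_mul, abs_two]
  ring

lemma sum_min_inner_sq_of_sum_csq_eq_zero (ha : ∑ j, csq (a j) = 0) {s d : E2}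
    (hs : ‖s‖ = 1) (hd : ‖d‖ = 1) :
    ∑ j, min (⟪a j, s⟫ ^ 2) (⟪a j, d⟫ ^ 2) =
      (∑ j, ‖csq (a j)‖ - (∑ j, |⟪csq (a j), csq s - csq d⟫|) / 2) / 2 := by
  simp only [min_inner_sq_of_norm_eq_one _ hs hd, ← Finset.sum_div, Finset.sum_add_distrib,
    Finset.sum_sub_distrib, ← sum_inner, ha, inner_zero_left]
  ring

theorem le_lipL_sq_of_sum_csq_eq_zero (ha : ∑ j, csq (a j) = 0) {D : ℝ}
    (hD : ∀ w, ∑ j, |⟪csq (a j), w⟫| ≤ D * ‖w‖) :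
    (∑ j, ‖csq (a j)‖ - D) / 2 ≤ lipL a ^ 2 := by
  refine le_lipL_sq a fun x y => ?_
  obtain ⟨σ, hσ⟩ := exists_norm_smul_unitVec (x + y)
  obtain ⟨τ, hτ⟩ := exists_norm_smul_unitVec (x - y)
  set s := unitVec σ
  set d := unitVec τ
  have hs : ‖s‖ = 1 := norm_unitVec σ
  have hd : ‖d‖ = 1 := norm_unitVec τ
  have hsum : (∑ j, ‖csq (a j)‖ - D) / 2 ≤ ∑ j, min (⟪a j, s⟫ ^ 2) (⟪a j, d⟫ ^ 2) := by
    have hD0 : 0 ≤ D := by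
      have := (Finset.sum_nonneg fun j _ => abs_nonneg ⟪csq (a j), s⟫).trans (hD s)
      rwa [hs, mul_one] at this
    have hw : ‖csq s - csq d‖ ≤ 2 := by
      have := norm_sub_le (csq s) (csq d)
      rw [norm_csq, norm_csq, hs, hd] at this
      linarith
    rw [sum_min_inner_sq_of_sum_csq_eq_zero a ha hs hd]
    linarith [(hD (csq s - csq d)).trans (mul_le_mul_of_nonneg_left hw hD0)]
  have hscale {p : ℝ} {z e : E2} (hp : 0 ≤ p) (hpz : p ≤ ‖z‖) (hz : ‖z‖ • e = z) (j : Fin m) :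
      p ^ 2 * ⟪a j, e⟫ ^ 2 ≤ ⟪a j, z⟫ ^ 2 := by
    rw [← hz, real_inner_smul_right, mul_pow]
    gcongr
  rw [norm_PhiMap_sub_sq]
  calc (∑ j, ‖csq (a j)‖ - D) / 2 * pdist x y ^ 2
      ≤ pdist x y ^ 2 * ∑ j, min (⟪a j, s⟫ ^ 2) (⟪a j, d⟫ ^ 2) := by
        rw [mul_comm]
        gcongr
    _ = ∑ j, min (pdist x y ^ 2 * ⟪a j, s⟫ ^ 2) (pdist x y ^ 2 * ⟪a j, d⟫ ^ 2) := by
        simp only [Finset.mul_sum, mul_min_of_nonneg _ _ (sq_nonneg (pdist x y))]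
    _ ≤ ∑ j, min (⟪a j, x + y⟫ ^ 2) (⟪a j, x - y⟫ ^ 2) := by
        gcongr with j
        · exact hscale (pdist_nonneg x y) (min_le_right _ _) hσ j
        · exact hscale (pdist_nonneg x y) (min_le_left _ _) hτ j

theorem condNum_eq_ofReal_rpow :
    condNum a = ENNReal.ofReal (lipL a ^ 2 / lipU a ^ 2) ^ (-(1 / 2) : ℝ) := by
  rw [condNum]
  split_ifs with hL
  · simp [hL]
  · have hLpos : 0 < lipL a := (lipL_nonneg a).lt_of_ne' hL
    have hUpos : 0 < lipU a := hLpos.trans_le (lipL_le_lipU a)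
    rw [ENNReal.ofReal_rpow_of_pos (by positivity), rpow_neg (by positivity), ← sqrt_eq_rpow,
      ← div_pow, sqrt_sq (by positivity), inv_div]

end LipschitzConstants

section HalfPeriodVariation

variable {m : ℕ} {θ : ℕ → ℝ}

lemma integral_abs_sin_sub (a t : ℝ) : ∫ s in a..a + π, |sin (s - t)| = 2 := by
  have hper : Function.Periodic (fun s => |sin s|) π := fun s => by simp [sin_add_pi]
  rw [intervalIntegral.integral_comp_sub_right (fun s => |sin s|) t, add_sub_right_comm,
    hper.intervalIntegral_add_eq (a - t) 0, zero_add]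
  calc ∫ s in 0..π, |sin s| = ∫ s in 0..π, sin s :=
        intervalIntegral.integral_congr fun s hs => by
          rw [Set.uIcc_of_le pi_pos.le] at hs
          exact abs_of_nonneg (sin_nonneg_of_mem_Icc hs)
    _ = 2 := by
        rw [integral_sin, cos_zero, cos_pi]
        norm_num

lemma sum_abs_cos_sub_le_two (hθ : Monotone θ) (hm : θ m = θ 0 + π) (t : ℝ) :
    ∑ k ∈ Finset.range m, |cos (θ (k + 1) - t) - cos (θ k - t)| ≤ 2 := by
  have hint (a b : ℝ) : |cos (b - t) - cos (a - t)| = |∫ s in a..b, sin (s - t)| := by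
    rw [intervalIntegral.integral_comp_sub_right, integral_sin, abs_sub_comm]
  calc ∑ k ∈ Finset.range m, |cos (θ (k + 1) - t) - cos (θ k - t)|
      ≤ ∑ k ∈ Finset.range m, ∫ s in θ k..θ (k + 1), |sin (s - t)| := by
        refine Finset.sum_le_sum fun k _ => ?_
        rw [hint]
        exact intervalIntegral.abs_integral_le_integral_abs (hθ k.le_succ)
    _ = ∫ s in θ 0..θ m, |sin (s - t)| :=
        intervalIntegral.sum_integral_adjacent_intervals fun k _ =>
          Continuous.intervalIntegrable (by fun_prop) _ _
    _ = 2 := by rw [hm, integral_abs_sin_sub]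

lemma two_le_sum_abs_cos_sub (hm : θ m = θ 0 + π) {j : ℕ} (hj : j ≤ m) :
    2 ≤ ∑ k ∈ Finset.range m, |cos (θ (k + 1) - θ j) - cos (θ k - θ j)| := by
  have habs (a b : ℕ) (hab : a ≤ b) : |cos (θ b - θ j) - cos (θ a - θ j)| ≤
      ∑ k ∈ Finset.Ico a b, |cos (θ (k + 1) - θ j) - cos (θ k - θ j)| := by
    simpa only [dist_eq, abs_sub_comm] using
      dist_le_Ico_sum_dist (fun k => cos (θ k - θ j)) hab
  have hcos : cos (θ m - θ j) = -cos (θ 0 - θ j) := by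
    rw [hm, add_sub_right_comm, cos_add_pi]
  have h₀ := (le_abs_self _).trans (habs 0 j (Nat.zero_le j))
  have h₁ := (neg_le_abs _).trans (habs j m hj)
  rw [Finset.range_eq_Ico, ← Finset.sum_Ico_consecutive _ (Nat.zero_le j) hj]
  rw [sub_self, cos_zero] at h₀ h₁
  linarith

lemma abs_cos_sub_sub_cos_sub {a b : ℝ} (hab : a ≤ b) (hba : b ≤ a + 2 * π) (t : ℝ) :
    |cos (b - t) - cos (a - t)| = 2 * (sin ((b - a) / 2) * |cos (t - (a + b + π) / 2)|) := by
  have hcos : cos (t - (a + b + π) / 2) = -sin ((b - t + (a - t)) / 2) := by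
    rw [← sin_neg, ← cos_sub_pi_div_two]
    ring_nf
  have hsin : 0 ≤ sin ((b - a) / 2) :=
    sin_nonneg_of_nonneg_of_le_pi (by linarith) (by linarith)
  rw [cos_sub_cos, hcos, abs_neg, sub_sub_sub_cancel_right, abs_mul, abs_mul, abs_of_nonneg hsin]
  norm_num
  ring

lemma le_add_pi_of_lt (hθ : Monotone θ) (hm : θ m = θ 0 + π) {k : ℕ} (hk : k < m) :
    θ (k + 1) ≤ θ k + π := by
  linarith [hθ (Nat.zero_le k), hθ (Nat.succ_le_of_lt hk)]

lemma two_mul_sum_sin_mul_abs_cos (hθ : Monotone θ) (hm : θ m = θ 0 + π) (t : ℝ) :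
    2 * ∑ k ∈ Finset.range m,
        sin ((θ (k + 1) - θ k) / 2) * |cos (t - (θ k + θ (k + 1) + π) / 2)| =
      ∑ k ∈ Finset.range m, |cos (θ (k + 1) - t) - cos (θ k - t)| := by
  rw [Finset.mul_sum]
  refine Finset.sum_congr rfl fun k hk => ?_
  have := le_add_pi_of_lt hθ hm (Finset.mem_range.1 hk)
  rw [abs_cos_sub_sub_cos_sub (hθ k.le_succ) (by linarith [pi_pos])]

lemma sum_sin_half_gap_le (hθ : Monotone θ) (hm : θ m = θ 0 + π) :
    ∑ k ∈ Finset.range m, sin ((θ (k + 1) - θ k) / 2) ≤ m * sin (π / (2 * m)) := by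
  have hm0 : m ≠ 0 := by
    rintro rfl
    linarith [pi_pos]
  have hm1 : (m : ℝ) ≠ 0 := by exact_mod_cast hm0
  have hmem (k : ℕ) (hk : k ∈ Finset.range m) : (θ (k + 1) - θ k) / 2 ∈ Set.Icc 0 π := by
    have hgap := le_add_pi_of_lt hθ hm (Finset.mem_range.1 hk)
    have hle := hθ k.le_succ
    exact ⟨by linarith, by linarith [pi_pos]⟩
  have hjensen := strictConcaveOn_sin_Icc.concaveOn.le_map_sum (w := fun _ => (m : ℝ)⁻¹)
    (fun _ _ => by positivity) (by simp [hm1]) hmem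
  have hmean : ∑ k ∈ Finset.range m, (m : ℝ)⁻¹ • ((θ (k + 1) - θ k) / 2) = π / (2 * m) := by
    rw [← Finset.smul_sum, ← Finset.sum_div, Finset.sum_range_sub, hm, smul_eq_mul]
    field_simp
    ring
  rw [hmean, ← Finset.smul_sum, smul_eq_mul, inv_mul_le_iff₀ (by positivity)] at hjensen
  exact hjensen

end HalfPeriodVariation

section Reinhardt

lemma antitone_ennreal_rpow {z : ℝ} (hz : z ≤ 0) : Antitone fun x : ℝ≥0∞ => x ^ z := by
  intro x y hxy
  have h : (x ^ z)⁻¹ ≤ (y ^ z)⁻¹ := by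
    simpa only [ENNReal.rpow_neg] using ENNReal.rpow_le_rpow hxy (neg_nonneg.2 hz)
  exact ENNReal.inv_le_inv.1 h

lemma abs_cos_add_int_mul_pi (x : ℝ) (n : ℤ) : |cos (x + n * π)| = |cos x| := by
  rw [cos_add_int_mul_pi, abs_mul, abs_neg_one_zpow, one_mul]

lemma exists_monotone_modulo_pi {m : ℕ} (hm : m ≠ 0) (t : Fin m → ℝ) :
    ∃ θ : ℕ → ℝ, Monotone θ ∧ θ m = θ 0 + π ∧
      ∀ j, ∃ i ≤ m, ∃ z : ℤ, t j = θ i + z * π := by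
  let r : Fin m → ℝ := fun j => toIcoMod pi_pos 0 (t j)
  have hr (j : Fin m) : r j ∈ Set.Ico 0 π := toIcoMod_mem_Ico' pi_pos (t j)
  let σ := Tuple.sort r
  have hσ : Monotone (r ∘ σ) := Tuple.monotone_sort r
  have hm0 : 0 < m := Nat.pos_of_ne_zero hm
  let θ : ℕ → ℝ := fun k => if h : k < m then r (σ ⟨k, h⟩) else r (σ ⟨0, hm0⟩) + π
  refine ⟨θ, fun i k hik => ?_, by simp [θ, hm0], fun j => ?_⟩
  · simp only [θ]
    split_ifs with hi hk
    · exact hσ (by simpa using hik)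
    · linarith [(hr (σ ⟨i, hi⟩)).2, (hr (σ ⟨0, hm0⟩)).1]
    · omega
    · exact le_rfl
  · refine ⟨σ.symm j, (σ.symm j).2.le, toIcoDiv pi_pos 0 (t j), ?_⟩
    have hθ : θ (σ.symm j) = r j := by simp [θ]
    rw [hθ, ← zsmul_eq_mul]
    exact (toIcoMod_add_toIcoDiv_zsmul pi_pos 0 (t j)).symm

theorem exists_sum_norm_le_mul_sum_abs_inner {m : ℕ} (hm : m ≠ 0) (v : Fin m → E2) :
    ∃ u, ‖u‖ = 1 ∧ ∑ j, ‖v j‖ ≤ m * sin (π / (2 * m)) * ∑ j, |⟪v j, u⟫| := by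
  choose t ht using fun j => exists_norm_smul_unitVec (v j)
  obtain ⟨θ, hmono, hθm, hnode⟩ := exists_monotone_modulo_pi hm t
  let φ : ℕ → ℝ := fun k => (θ k + θ (k + 1) + π) / 2
  let w : ℕ → ℝ := fun k => sin ((θ (k + 1) - θ k) / 2)
  let H : ℕ → ℝ := fun k => ∑ j, |⟪v j, unitVec (φ k)⟫|
  have hinner (j : Fin m) (k : ℕ) : |⟪v j, unitVec (φ k)⟫| = ‖v j‖ * |cos (t j - φ k)| := by
    conv_lhs => rw [← ht j]
    rw [real_inner_smul_left, inner_unitVec, abs_mul, abs_norm]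
  have hw (k : ℕ) (hk : k ∈ Finset.range m) : 0 ≤ w k := by
    have hgap := le_add_pi_of_lt hmono hθm (Finset.mem_range.1 hk)
    have hle := hmono k.le_succ
    exact sin_nonneg_of_nonneg_of_le_pi (by linarith) (by linarith [pi_pos])
  have hone (j : Fin m) : 1 ≤ ∑ k ∈ Finset.range m, w k * |cos (t j - φ k)| := by
    obtain ⟨i, hi, z, hz⟩ := hnode j
    have h := two_le_sum_abs_cos_sub hθm hi
    rw [← two_mul_sum_sin_mul_abs_cos hmono hθm] at h
    simp only [hz, add_sub_right_comm (θ i), abs_cos_add_int_mul_pi]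
    linarith
  obtain ⟨K, -, hmax⟩ := Finset.exists_max_image (Finset.range m) H ⟨0, by simpa using hm.bot_lt⟩
  refine ⟨unitVec (φ K), norm_unitVec _, ?_⟩
  calc ∑ j, ‖v j‖ ≤ ∑ j, ‖v j‖ * ∑ k ∈ Finset.range m, w k * |cos (t j - φ k)| :=
        Finset.sum_le_sum fun j _ => le_mul_of_one_le_right (norm_nonneg _) (hone j)
    _ = ∑ k ∈ Finset.range m, w k * H k := by
        simp only [H, hinner, Finset.mul_sum]
        rw [Finset.sum_comm]
        simp only [mul_left_comm]
    _ ≤ ∑ k ∈ Finset.range m, w k * H K :=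
        Finset.sum_le_sum fun k hk => mul_le_mul_of_nonneg_left (hmax k hk) (hw k hk)
    _ = (∑ k ∈ Finset.range m, w k) * H K := (Finset.sum_mul _ _ _).symm
    _ ≤ m * sin (π / (2 * m)) * H K :=
        mul_le_mul_of_nonneg_right (sum_sin_half_gap_le hmono hθm)
          (Finset.sum_nonneg fun _ _ => abs_nonneg _)

lemma one_le_mul_sin_pi_div {m : ℕ} (hm : m ≠ 0) : 1 ≤ m * sin (π / (2 * m)) := by
  have hm1 : (1 : ℝ) ≤ m := by exact_mod_cast Nat.one_le_iff_ne_zero.2 hm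
  have h := mul_le_sin (x := π / (2 * m)) (by positivity)
    (div_le_div_of_nonneg_left pi_pos.le two_pos (by linarith))
  calc (1 : ℝ) = m * (2 / π * (π / (2 * m))) := by field_simp
    _ ≤ m * sin (π / (2 * m)) := by gcongr

theorem ofReal_rpow_le_condNum {m : ℕ} (hm : m ≠ 0) (a : Fin m → E2) :
    ENNReal.ofReal (1 - 1 / (m * sin (π / (2 * m)))) ^ (-(1 / 2) : ℝ) ≤ condNum a := by
  obtain ⟨u, hu, hle⟩ := exists_sum_norm_le_mul_sum_abs_inner hm fun j => csq (a j)
  have hM := one_le_mul_sin_pi_div hm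
  set M := m * sin (π / (2 * m))
  have hM0 : 0 < M := by linarith
  have hc : 0 ≤ 1 - 1 / M := sub_nonneg.2 (div_le_one_of_le₀ hM hM0.le)
  have hP : (∑ j, ‖csq (a j)‖) / M ≤ ∑ j, |⟪csq (a j), u⟫| := by rwa [div_le_iff₀' hM0]
  have hL : lipL a ^ 2 ≤ (1 - 1 / M) * lipU a ^ 2 := calc
    lipL a ^ 2 ≤ (∑ j, ‖csq (a j)‖ - ∑ j, |⟪csq (a j), u⟫|) / 2 := lipL_sq_le a hu
    _ ≤ (∑ j, ‖csq (a j)‖ - (∑ j, ‖csq (a j)‖) / M) / 2 := by gcongr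
    _ = (1 - 1 / M) * ((∑ j, ‖csq (a j)‖) / 2) := by ring
    _ ≤ (1 - 1 / M) * lipU a ^ 2 := by
      rw [lipU_sq]
      gcongr
      exact le_add_of_nonneg_right (norm_nonneg _)
  rw [condNum_eq_ofReal_rpow]
  refine antitone_ennreal_rpow (by norm_num) (ENNReal.ofReal_le_ofReal ?_)
  exact div_le_of_le_mul₀ (sq_nonneg _) hc hL

/-- The polar angles of the edges of a Reinhardt polygon, an equilateral `m`-gon of least diameter
for its perimeter: the multiples of `π / m`, shifted by odd multiples of `π` on every other block of
`l` consecutive indices. The polygon closes up when `m / l` is an odd integer greater than `1`. -/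
def reinhardtAngle (m l j : ℕ) : ℝ := j * π / m + (j / l : ℕ) * π

/-- The frame whose image under `csq` consists of the edges of a Reinhardt polygon; it has the least
condition number when `m / l` is an odd integer greater than `1`. -/
def reinhardtFrame (m l : ℕ) (j : Fin m) : E2 := unitVec (reinhardtAngle m l j / 2)

lemma csq_reinhardtFrame (m l : ℕ) (j : Fin m) :
    csq (reinhardtFrame m l j) = unitVec (reinhardtAngle m l j) := by
  rw [reinhardtFrame, csq_unitVec, mul_div_cancel₀ _ two_ne_zero]

lemma sum_unitVec_add_mul_eq_zero {k p : ℕ} (hk : 1 < k) (hp : p.Coprime k) (t : ℝ) :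
    ∑ i : Fin k, unitVec (t + i * (2 * π * (p / k))) = 0 := by
  have hζ := Complex.isPrimitiveRoot_exp_of_coprime p k (by omega) hp
  set ζ := Complex.exp (2 * π * Complex.I * (p / k))
  have hexp (i : ℕ) : Complex.exp ((t + i * (2 * π * (p / k)) : ℝ) * Complex.I) =
      Complex.exp (t * Complex.I) * ζ ^ i := by
    rw [← Complex.exp_nat_mul, ← Complex.exp_add]
    push_cast
    ring_nf
  rw [Fin.sum_univ_eq_sum_range (fun i => unitVec (t + i * (2 * π * (p / k)))) k]
  simp only [unitVec_eq_repr_exp, hexp, ← map_sum, ← Finset.mul_sum, hζ.geom_sum_eq_zero hk,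
    mul_zero, map_zero]

lemma sum_unitVec_reinhardtAngle_eq_zero {k l : ℕ} (hk : Odd k) (hk1 : 1 < k) :
    ∑ j : Fin (k * l), unitVec (reinhardtAngle (k * l) l j) = 0 := by
  obtain ⟨q, rfl⟩ := hk
  have hcop : (q + 1).Coprime (2 * q + 1) :=
    Nat.isCoprime_iff_coprime.1 ⟨2, -1, by push_cast; ring⟩
  rw [← finProdFinEquiv.sum_comp, Fintype.sum_prod_type_right]
  refine Finset.sum_eq_zero fun r _ => ?_
  have hl : 0 < l := r.pos
  rw [← sum_unitVec_add_mul_eq_zero hk1 hcop (r * π / ((2 * q + 1) * l))]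
  refine Finset.sum_congr rfl fun i _ => congrArg unitVec ?_
  have hdiv : (r + l * i : ℕ) / l = i := by
    rw [Nat.add_mul_div_left _ _ hl, Nat.div_eq_of_lt r.2, zero_add]
  rw [reinhardtAngle, finProdFinEquiv_apply_val, hdiv]
  push_cast
  field_simp
  ring

lemma sin_mul_sum_abs_cos_le_one {m : ℕ} (hm : m ≠ 0) (t : ℝ) :
    sin (π / (2 * m)) * ∑ k ∈ Finset.range m, |cos (t - k * π / m)| ≤ 1 := by
  have hm0 : (m : ℝ) ≠ 0 := by exact_mod_cast hm
  -- The nodes are shifted so that the normals to their bisectors are the `k * π / m`.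
  let θ : ℕ → ℝ := fun k => k * π / m - π / (2 * m) - π / 2
  have hmono : Monotone θ := fun i k hik => by
    simp only [θ]
    gcongr
  have hθm : θ m = θ 0 + π := by
    simp only [θ]
    field_simp
    push_cast
    ring
  have hgap (k : ℕ) : (θ (k + 1) - θ k) / 2 = π / (2 * m) := by
    simp only [θ]
    push_cast
    field_simp
    ring
  have hnormal (k : ℕ) : (θ k + θ (k + 1) + π) / 2 = k * π / m := by
    simp only [θ]
    push_cast
    field_simp
    ring
  have hvar := sum_abs_cos_sub_le_two hmono hθm t
  rw [← two_mul_sum_sin_mul_abs_cos hmono hθm] at hvar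
  simp only [hgap, hnormal, ← Finset.mul_sum] at hvar
  linarith

lemma sin_mul_sum_abs_inner_reinhardtAngle_le {m : ℕ} (hm : m ≠ 0) (l : ℕ) (x : E2) :
    sin (π / (2 * m)) * ∑ j : Fin m, |⟪unitVec (reinhardtAngle m l j), x⟫| ≤ ‖x‖ := by
  obtain ⟨t, ht⟩ := exists_norm_smul_unitVec x
  have hinner (j : ℕ) :
      |⟪unitVec (reinhardtAngle m l j), x⟫| = ‖x‖ * |cos (t - j * π / m)| := by
    have hangle : reinhardtAngle m l j - t = j * π / m - t + ((j / l : ℕ) : ℤ) * π := by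
      rw [reinhardtAngle, Int.cast_natCast]
      ring
    conv_lhs => rw [← ht]
    rw [real_inner_smul_right, inner_unitVec, abs_mul, abs_norm, hangle, abs_cos_add_int_mul_pi,
      ← cos_neg, neg_sub]
  rw [Fin.sum_univ_eq_sum_range (fun j => |⟪unitVec (reinhardtAngle m l j), x⟫|) m]
  simp only [hinner, ← Finset.mul_sum]
  rw [mul_left_comm]
  exact mul_le_of_le_one_right (norm_nonneg x) (sin_mul_sum_abs_cos_le_one hm t)

theorem condNum_reinhardtFrame_le {k l : ℕ} (hk : Odd k) (hk1 : 1 < k) (hl : l ≠ 0) :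
    condNum (reinhardtFrame (k * l) l) ≤
      ENNReal.ofReal (1 - 1 / ((k * l : ℕ) * sin (π / (2 * (k * l : ℕ))))) ^ (-(1 / 2) : ℝ) := by
  have hm : k * l ≠ 0 := mul_ne_zero (by omega) hl
  have hm0 : (0 : ℝ) < (k * l : ℕ) := by exact_mod_cast Nat.pos_of_ne_zero hm
  have hsum : ∑ j, csq (reinhardtFrame (k * l) l j) = 0 := by
    simpa only [csq_reinhardtFrame] using sum_unitVec_reinhardtAngle_eq_zero hk hk1
  have hS := pos_of_mul_pos_right (one_pos.trans_le (one_le_mul_sin_pi_div hm)) hm0.le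
  have hwidth := sin_mul_sum_abs_inner_reinhardtAngle_le hm l
  generalize k * l = m at *
  set S := sin (π / (2 * m))
  have hP : ∑ j, ‖csq (reinhardtFrame m l j)‖ = m := by
    simp [csq_reinhardtFrame, norm_unitVec]
  have hL : (m - S⁻¹) / 2 ≤ lipL (reinhardtFrame m l) ^ 2 := by
    rw [← hP]
    refine le_lipL_sq_of_sum_csq_eq_zero _ hsum fun x => ?_
    rw [le_inv_mul_iff₀ hS]
    simpa only [csq_reinhardtFrame] using hwidth x
  rw [condNum_eq_ofReal_rpow]
  refine antitone_ennreal_rpow (by norm_num) (ENNReal.ofReal_le_ofReal ?_)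
  rw [lipU_sq, hsum, hP, norm_zero, add_zero, le_div_iff₀ (by positivity)]
  refine le_trans (le_of_eq ?_) hL
  field_simp

end Reinhardt

/-- If `m ≥ 3` has an odd factor, then the minimal condition number over
all `A ∈ ℝ^{m×2}` equals `(1 − 1/(m·sin(π/(2m))))^{−1/2}`, and the infimum is attained. -/
theorem stmt7 {m : ℕ} (hm : 3 ≤ m) (hodd : ∃ k, Odd k ∧ 1 < k ∧ k ∣ m) :
    (⨅ A : Fin m → E2, condNum A) =
        ENNReal.ofReal (1 - 1 / (m * Real.sin (π / (2 * m)))) ^ (-(1 / 2) : ℝ) ∧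
    ∃ A : Fin m → E2, condNum A = ⨅ M : Fin m → E2, condNum M := by
  obtain ⟨k, hk, hk1, l, rfl⟩ := hodd
  have hlower (A : Fin (k * l) → E2) := ofReal_rpow_le_condNum (by omega) A
  have hupper := condNum_reinhardtFrame_le (l := l) hk hk1 (by rintro rfl; omega)
  have hinf := le_antisymm ((iInf_le _ _).trans hupper) (le_iInf hlower)
  exact ⟨hinf, _, (le_antisymm hupper (hlower _)).trans hinf.symm⟩
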